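/- arXiv:1204.4080 — 5 statements merged into one kernel-verified Lean document; each statement's English description precedes it below -/
import Mathlib

section
/- Let φ, φ', φ'', ψ, ψ', ψ'' : ℝ → H be functions such that for every t ∈ ℝ: φ has derivative φ'(t) at t and φ' has derivative φ''(t) at t (and similarly for ψ, ψ', ψ''); φ(t), ψ(t) and ψ'(t) lie in the domain of T; φ''(t) = −T(φ(t)) and ψ''(t) = −T(ψ(t)); and the map t ↦ T(ψ(t)) has derivative T(ψ'(t)) at every t. Then the energy E(t) = ⟪φ'(t), ψ'(t)⟫ + ⟪φ(t), T(ψ(t))⟫ is independent of t, i.e. E(t) = E(0) for all t ∈ ℝ. -/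
open scoped InnerProductSpace

/-- Conservation of the energy form
`E(t) = ⟪φ'(t), ψ'(t)⟫ + ⟪φ(t), T(ψ(t))⟫` for solutions of the abstract
Klein–Gordon equation `φ'' = −T φ` with `T` a symmetric unbounded operator. -/
theorem energy_form_conserved {𝕜 : Type*} [RCLike 𝕜]
    {H : Type*} [NormedAddCommGroup H] [InnerProductSpace 𝕜 H]
    [NormedSpace ℝ H] [IsScalarTower ℝ 𝕜 H]
    (T : H →ₗ.[𝕜] H)
    (hsym : ∀ x y : T.domain, ⟪T x, (y : H)⟫_𝕜 = ⟪(x : H), T y⟫_𝕜)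
    (φ φ' φ'' ψ ψ' ψ'' : ℝ → H)
    (hφ : ∀ t, HasDerivAt φ (φ' t) t) (hφ' : ∀ t, HasDerivAt φ' (φ'' t) t)
    (hψ : ∀ t, HasDerivAt ψ (ψ' t) t) (hψ' : ∀ t, HasDerivAt ψ' (ψ'' t) t)
    (hφdom : ∀ t, φ t ∈ T.domain) (hψdom : ∀ t, ψ t ∈ T.domain)
    (hψ'dom : ∀ t, ψ' t ∈ T.domain)
    (hφeq : ∀ t, φ'' t = -T ⟨φ t, hφdom t⟩)
    (hψeq : ∀ t, ψ'' t = -T ⟨ψ t, hψdom t⟩)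
    (hTψ : ∀ t, HasDerivAt (fun s => T ⟨ψ s, hψdom s⟩) (T ⟨ψ' t, hψ'dom t⟩) t) :
    ∀ t : ℝ,
      ⟪φ' t, ψ' t⟫_𝕜 + ⟪φ t, T ⟨ψ t, hψdom t⟩⟫_𝕜 =
      ⟪φ' 0, ψ' 0⟫_𝕜 + ⟪φ 0, T ⟨ψ 0, hψdom 0⟩⟫_𝕜 := by
  have hE : ∀ t, HasDerivAt
      (fun s => ⟪φ' s, ψ' s⟫_𝕜 + ⟪φ s, T ⟨ψ s, hψdom s⟩⟫_𝕜) 0 t := by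
    intro t
    refine (((hφ' t).inner 𝕜 (hψ' t)).add ((hφ t).inner 𝕜 (hTψ t))).congr_deriv ?_
    -- The `⟪φ', T ψ⟫` terms cancel by the equation for `ψ`; the equation for `φ` and the
    -- symmetry of `T`, applied to the pair `φ t`, `ψ' t`, cancel the other two.
    have h := hsym ⟨φ t, hφdom t⟩ ⟨ψ' t, hψ'dom t⟩
    rw [hφeq, hψeq, inner_neg_left, inner_neg_right, h]
    ring
  intro t
  exact is_const_of_deriv_eq_zero (fun s => (hE s).differentiableAt) (fun s => (hE s).deriv) t 0
end

section
/- Let φ, φ', φ'', ψ, ψ', ψ'' : ℝ → H be functions such that for every t ∈ ℝ: φ has derivative φ'(t) at t and φ' has derivative φ''(t) at t (and similarly for ψ, ψ', ψ''); φ(t) and ψ(t) lie in the domain of T; and φ''(t) = −T(φ(t)) and ψ''(t) = −T(ψ(t)). Then the symplectic form σ(t) = ⟪φ(t), ψ'(t)⟫ − ⟪φ'(t), ψ(t)⟫ is independent of t, i.e. σ(t) = σ(0) for all t ∈ ℝ. -/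
open scoped InnerProductSpace

/-- Conservation of the symplectic form
`σ(t) = ⟪φ(t), ψ'(t)⟫ − ⟪φ'(t), ψ(t)⟫` for solutions of the abstract
Klein–Gordon equation `φ'' = −T φ` with `T` a symmetric unbounded operator. -/
theorem symplectic_form_conserved {𝕜 : Type*} [RCLike 𝕜]
    {H : Type*} [NormedAddCommGroup H] [InnerProductSpace 𝕜 H]
    [NormedSpace ℝ H] [IsScalarTower ℝ 𝕜 H]
    (T : H →ₗ.[𝕜] H)
    (hsym : ∀ x y : T.domain, ⟪T x, (y : H)⟫_𝕜 = ⟪(x : H), T y⟫_𝕜)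
    (φ φ' φ'' ψ ψ' ψ'' : ℝ → H)
    (hφ : ∀ t, HasDerivAt φ (φ' t) t) (hφ' : ∀ t, HasDerivAt φ' (φ'' t) t)
    (hψ : ∀ t, HasDerivAt ψ (ψ' t) t) (hψ' : ∀ t, HasDerivAt ψ' (ψ'' t) t)
    (hφdom : ∀ t, φ t ∈ T.domain) (hψdom : ∀ t, ψ t ∈ T.domain)
    (hφeq : ∀ t, φ'' t = -T ⟨φ t, hφdom t⟩)
    (hψeq : ∀ t, ψ'' t = -T ⟨ψ t, hψdom t⟩) :
    ∀ t : ℝ,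
      ⟪φ t, ψ' t⟫_𝕜 - ⟪φ' t, ψ t⟫_𝕜 =
      ⟪φ 0, ψ' 0⟫_𝕜 - ⟪φ' 0, ψ 0⟫_𝕜 := by
  -- The `φ'`-`ψ'` cross terms cancel, and the two remaining terms cancel by symmetry of `T`.
  have hderiv : ∀ t, HasDerivAt (fun s => ⟪φ s, ψ' s⟫_𝕜 - ⟪φ' s, ψ s⟫_𝕜) 0 t := by
    intro t
    refine (((hφ t).inner 𝕜 (hψ' t)).sub ((hφ' t).inner 𝕜 (hψ t))).congr_deriv ?_
    rw [hφeq t, hψeq t, inner_neg_left, inner_neg_right,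
      hsym ⟨φ t, hφdom t⟩ ⟨ψ t, hψdom t⟩]
    ring
  intro t
  exact is_const_of_deriv_eq_zero (fun s => (hderiv s).differentiableAt)
    (fun s => (hderiv s).deriv) t 0
end

section
/- Assume T is densely defined and self-adjoint (its adjoint equals T). Let φ, φ', φ'' : ℝ → H be functions such that for every t ∈ ℝ: φ has derivative φ'(t) at t, φ' has derivative φ''(t) at t, φ(t) lies in the domain of T, and φ''(t) = −T(φ(t)). If φ(0) = 0 and φ'(0) = 0, then φ(t) = 0 for all t ∈ ℝ. -/
/-!
The key is an identity that rests on the symmetry of `T`. For fixed `t`, the Lagrange bracket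
`W s = ⟪φ (t + s), φ' (t - s)⟫ + ⟪φ' (t + s), φ (t - s)⟫` is constant in `s`: in its derivative
the terms in `φ'` cancel, and the terms in `φ'' = -T φ` cancel by symmetry. At `s = t` the
bracket vanishes by the Cauchy data, so at `s = 0` it gives
`⟪φ t, φ' t⟫ + ⟪φ' t, φ t⟫ = 0`. This is the derivative of `⟪φ t, φ t⟫`, which is therefore
constant, with value `0` at time `0`.
-/

open scoped InnerProductSpace

/-- Uniqueness for the abstract Klein–Gordon equation: a twice (strongly)
differentiable solution of `φ'' = −T φ`, with `T` densely defined and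
self-adjoint, vanishing together with its derivative at `t = 0`, vanishes
identically. -/
theorem abstract_KG_uniqueness {𝕜 : Type*} [RCLike 𝕜]
    {H : Type*} [NormedAddCommGroup H] [InnerProductSpace 𝕜 H] [CompleteSpace H]
    [NormedSpace ℝ H] [IsScalarTower ℝ 𝕜 H]
    (T : H →ₗ.[𝕜] H)
    (hdense : Dense (T.domain : Set H))
    (hsa : T.adjoint = T)
    (φ φ' φ'' : ℝ → H)
    (hφ : ∀ t, HasDerivAt φ (φ' t) t) (hφ' : ∀ t, HasDerivAt φ' (φ'' t) t)
    (hφdom : ∀ t, φ t ∈ T.domain)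
    (hφeq : ∀ t, φ'' t = -T ⟨φ t, hφdom t⟩)
    (h0 : φ 0 = 0) (h0' : φ' 0 = 0) :
    ∀ t : ℝ, φ t = 0 := by
  have hsymm : ∀ x y : T.domain, inner 𝕜 (T x) (y : H) = inner 𝕜 (x : H) (T y) := by
    have h := T.adjoint_isFormalAdjoint hdense
    rw [hsa] at h
    exact fun x y => h x y
  have key : ∀ t, inner 𝕜 (φ t) (φ' t) + inner 𝕜 (φ' t) (φ t) = 0 := by
    intro t
    let W : ℝ → 𝕜 := fun s =>
      inner 𝕜 (φ (t + s)) (φ' (t - s)) + inner 𝕜 (φ' (t + s)) (φ (t - s))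
    have hW : ∀ s, HasDerivAt W 0 s := by
      intro s
      have h1 := (hφ (t + s)).comp_const_add t s
      have h2 := (hφ' (t + s)).comp_const_add t s
      have h3 := (hφ (t - s)).comp_const_sub t s
      have h4 := (hφ' (t - s)).comp_const_sub t s
      refine ((h1.inner 𝕜 h4).add (h2.inner 𝕜 h3)).congr_deriv ?_
      have h5 := hsymm ⟨φ (t + s), hφdom _⟩ ⟨φ (t - s), hφdom _⟩
      simp only [hφeq, inner_neg_left, inner_neg_right, neg_neg, h5]
      ring
    have hconst : W 0 = W t :=
      is_const_of_deriv_eq_zero (fun s => (hW s).differentiableAt) (fun s => (hW s).deriv) 0 t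
    simpa [W, h0, h0'] using hconst
  intro t
  have hn : ∀ s, HasDerivAt (fun s => inner 𝕜 (φ s) (φ s)) 0 s := by
    intro s
    have h := (hφ s).inner 𝕜 (hφ s)
    rwa [key s] at h
  have hconst := is_const_of_deriv_eq_zero (fun s => (hn s).differentiableAt)
    (fun s => (hn s).deriv) t 0
  simpa [h0] using hconst
end

section
/- Let A i : H i →L[𝕜] H i be a bounded operator on H i for each i ∈ ι. Then the family of operator norms (‖A i‖)_{i∈ι} is bounded above if and only if there exists a bounded (continuous linear) operator T : lp H 2 → lp H 2 acting diagonally, i.e. satisfying (T x) i = A i (x i) for every x ∈ lp H 2 and every i ∈ ι. -/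
/-!
If every `‖A i‖` is at most `K`, then `∑ ‖A i (x i)‖² ≤ K² ∑ ‖x i‖²`, so the entrywise map is a
bounded operator on the direct sum (`lp.mapCLM`). Conversely, each `H i` embeds isometrically
as the vectors supported at `i` (`lp.norm_single`), and a diagonal operator `T` restricts there
to `A i`, so `‖A i‖ ≤ ‖T‖` for every `i`.
-/

/-- A family of bounded operators `A i : H i →L[𝕜] H i` has uniformly bounded operator
norms iff there is a bounded operator `T` on the Hilbert direct sum `lp H 2` acting
diagonally, i.e. `(T x) i = A i (x i)` for all `x` and `i`. -/
theorem directSum_bounded_iff_norms_bddAbove {𝕜 : Type*} [RCLike 𝕜]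
    {ι : Type*} {H : ι → Type*} [∀ i, NormedAddCommGroup (H i)]
    [∀ i, InnerProductSpace 𝕜 (H i)]
    (A : ∀ i, H i →L[𝕜] H i) :
    BddAbove (Set.range fun i => ‖A i‖) ↔
    ∃ T : lp H 2 →L[𝕜] lp H 2, ∀ (x : lp H 2) (i : ι), T x i = A i (x i) := by
  classical
  constructor
  · rintro ⟨K, hK⟩
    -- The bound is enlarged to `max K 0` because `K` may be negative when `ι` is empty.
    exact ⟨lp.mapCLM 2 A (K := max K 0) (le_max_right K 0)
      fun i => (hK ⟨i, rfl⟩).trans (le_max_left K 0), fun x i => rfl⟩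
  · rintro ⟨T, hT⟩
    refine ⟨‖T‖, ?_⟩
    rintro _ ⟨i, rfl⟩
    -- Test `T` on the vector supported at `i`, whose norm is that of its only entry.
    refine (A i).opNorm_le_bound (norm_nonneg T) fun v => ?_
    calc ‖A i v‖ = ‖T (lp.single 2 i v) i‖ := by rw [hT, lp.single_apply_self]
      _ ≤ ‖T (lp.single 2 i v)‖ := lp.norm_apply_le_norm two_ne_zero _ i
      _ ≤ ‖T‖ * ‖lp.single 2 i v‖ := T.le_opNorm _
      _ = ‖T‖ * ‖v‖ := by rw [lp.norm_single two_pos]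
end

section
/- Suppose that for each i ∈ ι the unbounded operator A i on H i is densely defined and self-adjoint (its adjoint equals A i). Then the direct sum ⊕ᵢ A i is densely defined and self-adjoint on lp H 2 (its adjoint equals ⊕ᵢ A i). -/
/-!
Pairing with vectors `lp.single 2 i a`, `a ∈ dom (A i)`, reduces everything to the summands. Such
vectors lie in the domain of `T`, and `T` sends them to `lp.single 2 i (A i a)`
(`directSum_single`). A vector orthogonal to all of them has every component orthogonal to the
dense subspace `dom (A i)`, so it vanishes and `T` is densely defined. Summing
`⟪A i (x i), y i⟫ = ⟪x i, A i (y i)⟫` over `i` shows that `T` is symmetric, i.e. `T ≤ T†`.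
Conversely, if `y ∈ dom T†`, testing against `lp.single 2 i a` gives
`⟪(T† y) i, a⟫ = ⟪y i, A i a⟫` for all `a ∈ dom (A i)`; self-adjointness of `A i` then yields
`y i ∈ dom (A i)` and `A i (y i) = (T† y) i`. This family is in `lp H 2`, so `y ∈ dom T`.
-/

open scoped InnerProductSpace

/-- The maximality half of self-adjointness: a vector `y` for which `x ↦ ⟪y, S x⟫` is represented
by some `w` already lies in the domain of `S`, and `S y = w`. -/
theorem exists_apply_eq_of_adjoint_eq {𝕜 E : Type*} [RCLike 𝕜] [NormedAddCommGroup E]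
    [InnerProductSpace 𝕜 E] [CompleteSpace E] {S : E →ₗ.[𝕜] E}
    (hd : Dense (S.domain : Set E)) (hS : S.adjoint = S) {y w : E}
    (h : ∀ x : S.domain, ⟪w, (x : E)⟫_𝕜 = ⟪y, S x⟫_𝕜) :
    ∃ hy : y ∈ S.domain, S ⟨y, hy⟩ = w := by
  have key : ∃ hy : y ∈ S.adjoint.domain, S.adjoint ⟨y, hy⟩ = w :=
    ⟨LinearPMap.mem_adjoint_domain_of_exists y ⟨w, h⟩, LinearPMap.adjoint_apply_eq hd _ h⟩
  rwa [hS] at key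

theorem directSum_single {𝕜 : Type*} [RCLike 𝕜]
    {ι : Type*} [DecidableEq ι] {H : ι → Type*} [∀ i, NormedAddCommGroup (H i)]
    [∀ i, InnerProductSpace 𝕜 (H i)]
    (A : ∀ i, H i →ₗ.[𝕜] H i)
    (T : lp H 2 →ₗ.[𝕜] lp H 2)
    (hTdom : ∀ x : lp H 2,
      x ∈ T.domain ↔
        ∃ h : ∀ i, x i ∈ (A i).domain, Memℓp (fun i => A i ⟨x i, h i⟩) 2)
    (hT : ∀ (x : T.domain) (i : ι) (hi : (x : lp H 2) i ∈ (A i).domain),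
      T x i = A i ⟨(x : lp H 2) i, hi⟩)
    (i : ι) (a : (A i).domain) :
    ∃ h : lp.single 2 i (a : H i) ∈ T.domain, T ⟨_, h⟩ = lp.single 2 i (A i a) := by
  have hmem : ∀ j, lp.single 2 i (a : H i) j ∈ (A j).domain := by
    intro j
    by_cases hj : j = i
    · subst hj
      rw [lp.single_apply_self]
      exact a.2
    · rw [lp.single_apply_ne _ _ _ hj]
      exact zero_mem _
  have hval : ∀ j, A j ⟨lp.single 2 i (a : H i) j, hmem j⟩ = lp.single 2 i (A i a) j := by
    intro j
    by_cases hj : j = i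
    · subst hj
      exact (congrArg (A j) (Subtype.ext (lp.single_apply_self 2 j (a : H j)))).trans
        (lp.single_apply_self 2 j (A j a)).symm
    · exact ((congrArg (A j) (Subtype.ext (lp.single_apply_ne 2 i (a : H i) hj))).trans
        (A j).map_zero).trans (lp.single_apply_ne 2 i (A i a) hj).symm
  have hd : lp.single 2 i (a : H i) ∈ T.domain := by
    refine (hTdom _).2 ⟨hmem, ?_⟩
    rw [funext hval]
    exact lp.memℓp _
  refine ⟨hd, lp.ext (funext fun j => ?_)⟩
  rw [hT ⟨_, hd⟩ j (hmem j), hval]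

theorem directSum_selfAdjoint {𝕜 : Type*} [RCLike 𝕜]
    {ι : Type*} {H : ι → Type*} [∀ i, NormedAddCommGroup (H i)]
    [∀ i, InnerProductSpace 𝕜 (H i)] [∀ i, CompleteSpace (H i)]
    (A : ∀ i, H i →ₗ.[𝕜] H i)
    (hdense : ∀ i, Dense (((A i).domain : Set (H i))))
    (hsa : ∀ i, (A i).adjoint = A i)
    (T : lp H 2 →ₗ.[𝕜] lp H 2)
    (hTdom : ∀ x : lp H 2,
      x ∈ T.domain ↔
        ∃ h : ∀ i, x i ∈ (A i).domain, Memℓp (fun i => A i ⟨x i, h i⟩) 2)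
    (hT : ∀ (x : T.domain) (i : ι) (hi : (x : lp H 2) i ∈ (A i).domain),
      T x i = A i ⟨(x : lp H 2) i, hi⟩) :
    Dense ((T.domain : Set (lp H 2))) ∧ T.adjoint = T := by
  classical
  have hsingle := directSum_single A T hTdom hT
  have hD : Dense (T.domain : Set (lp H 2)) := by
    rw [Submodule.dense_iff_topologicalClosure_eq_top, Submodule.topologicalClosure_eq_top_iff,
      Submodule.eq_bot_iff]
    intro y hy
    refine lp.ext (funext fun i => ?_)
    refine (hdense i).eq_zero_of_inner_right 𝕜 fun a ha => ?_
    obtain ⟨h, -⟩ := hsingle i ⟨a, ha⟩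
    rw [← lp.inner_single_left]
    exact (Submodule.mem_orthogonal _ _).1 hy _ h
  refine ⟨hD, ?_⟩
  have hsymm : T.IsFormalAdjoint T := by
    intro x y
    obtain ⟨hx, -⟩ := (hTdom x).1 x.2
    obtain ⟨hy, -⟩ := (hTdom y).1 y.2
    rw [lp.inner_eq_tsum, lp.inner_eq_tsum]
    refine tsum_congr fun i => ?_
    rw [hT x i (hx i), hT y i (hy i)]
    have hA := LinearPMap.adjoint_isFormalAdjoint (hdense i)
    rw [hsa i] at hA
    exact hA ⟨_, hx i⟩ ⟨_, hy i⟩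
  have hle : T ≤ T.adjoint := hsymm.le_adjoint hD
  refine (LinearPMap.eq_of_le_of_domain_eq hle (le_antisymm hle.1 fun y hy => ?_)).symm
  have key : ∀ i, ∃ h : y i ∈ (A i).domain, A i ⟨y i, h⟩ = T.adjoint ⟨y, hy⟩ i := by
    intro i
    refine exists_apply_eq_of_adjoint_eq (hdense i) (hsa i) fun a => ?_
    obtain ⟨h, hTa⟩ := hsingle i a
    have := LinearPMap.adjoint_isFormalAdjoint hD ⟨y, hy⟩ ⟨_, h⟩
    rwa [hTa, lp.inner_single_right, lp.inner_single_right] at this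
  choose h hval using key
  refine (hTdom y).2 ⟨h, ?_⟩
  rw [funext hval]
  exact lp.memℓp _
end
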